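/- Let A be the free abelian group on a set S (so the normal closure of S in A is A itself), and let ∂ : C → A be the free crossed module on S ⊆ A. Then the kernel of ∂ is isomorphic as a group to the exterior square A ∧ A (the second exterior power of A as a ℤ-module), so that ∂ fits into a central extension 0 → A ∧ A → C → A → 1. -/

import Mathlib

/-!
Since the base group `A` is abelian and generated by the values `∂ (φ s)`, the boundary `∂` is
onto and its kernel is central (the Peiffer identity for elements acting through `1`). Commutators
in `C` therefore depend only on the images in `A`, and give an alternating bilinear pairing on `A`,
that is, a homomorphism `Λ² A → C` with `∂ c ∧ ∂ d ↦ ⁅c, d⁆` (`exists_commutatorPairing`). The proof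
shows that it is injective with image `ker ∂`.

* Its image is `[C, C]`, which is contained in `ker ∂`. The reverse inclusion
  `freeCrossedModule_ker_le_commutator` says that `C` abelianized is `A`: homomorphisms from `C` to
  abelian groups are determined by their values on the generators `φ s`, so `C → C^ab` equals the
  composite of `∂` with the section `A → C^ab`, `s ↦ φ s`.
* It is injective (`commutatorPairing_injective`) because each coordinate functional on the free
  abelian group `Λ² A`, attached to a pair `s < t` of elements of `S`, is recovered from a morphism
  of `∂` to the crossed module `Heis(ℤ) → ℤ²` lifting the coordinates at `s` and `t`.

The universal property in the hypothesis concerns test objects in fixed universes, which may be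
too small to contain a copy of `C` or `A`. For this reason no explicit model of the free crossed
module is compared with `C`: the only test objects are `ℚ/ℤ → 1` and `Heis(ℤ) → ℤ²`, which exist in
every universe.
-/

/-- A crossed module: groups `C`, `G`, a homomorphism `∂ : C → G` (`map`), and an action of
`G` on `C` by group automorphisms (`act`) such that `∂(g • c) = g ∂(c) g⁻¹` and the Peiffer
identities `(∂ a) • b = a b a⁻¹` hold. -/
structure CrossedModule (C : Type*) (G : Type*) [Group C] [Group G] where
  map : C →* G
  act : G →* MulAut C
  map_act : ∀ (g : G) (c : C), map (act g c) = g * map c * g⁻¹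
  peiffer : ∀ a b : C, act (map a) b = a * b * a⁻¹

/-- A crossed module `∂ : C → G` is free on `φ : Y → C` if for every crossed module
`δ : D → H`, every homomorphism `α : G → H` and every map `b : Y → D` with
`α(∂(φ y)) = δ(b y)` for all `y`, there is a unique homomorphism `β : C → D` with
`β(φ y) = b y` for all `y`, such that `(β, α)` is a morphism of crossed modules, i.e.
`δ ∘ β = α ∘ ∂` and `β(g • c) = α(g) • β(c)`. -/
def CrossedModule.IsFreeOn {C : Type*} {G : Type*} [Group C] [Group G]
    (M : CrossedModule C G) {Y : Type*} (φ : Y → C) : Prop :=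
  ∀ {D : Type*} {H : Type*} [Group D] [Group H] (N : CrossedModule D H) (α : G →* H)
    (b : Y → D), (∀ y, α (M.map (φ y)) = N.map (b y)) →
    ∃! β : C →* D, (∀ y, β (φ y) = b y) ∧ (∀ c, N.map (β c) = α (M.map c)) ∧
      ∀ (g : G) (c : C), β (M.act g c) = N.act (α g) (β c)

open scoped commutatorElement IsMulCommutative

/-! ### Commutators in a central extension of an abelian group -/

section Commutator

variable {C : Type*} [Group C]

lemma commutatorElement_mul_left_of_mem_center {c c' d : C}
    (h : ⁅c', d⁆ ∈ Subgroup.center C) : ⁅c * c', d⁆ = ⁅c, d⁆ * ⁅c', d⁆ := by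
  have h1 : ⁅c * c', d⁆ = (c * ⁅c', d⁆) * c⁻¹ * ⁅c, d⁆ := by
    simp only [commutatorElement_def]; group
  rw [h1, Subgroup.mem_center_iff.1 h c, mul_inv_cancel_right, Subgroup.mem_center_iff.1 h]

lemma commutatorElement_mul_right_of_mem_center {c d d' : C}
    (h : ⁅c, d'⁆ ∈ Subgroup.center C) : ⁅c, d * d'⁆ = ⁅c, d⁆ * ⁅c, d'⁆ := by
  have h1 : ⁅c, d * d'⁆ = ⁅c, d⁆ * (d * ⁅c, d'⁆ * d⁻¹) := by
    simp only [commutatorElement_def]; group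
  rw [h1, Subgroup.mem_center_iff.1 h d, mul_inv_cancel_right]

variable {A : Type*} [AddCommGroup A] (π : C →* Multiplicative A)

lemma map_commutatorElement_eq_one (c d : C) : π ⁅c, d⁆ = 1 := by
  rw [map_commutatorElement, commutatorElement_eq_one_iff_mul_comm, mul_comm]

variable {π}

/-- In a central extension the commutator of two elements depends only on their images. -/
lemma commutatorElement_congr (hc : π.ker ≤ Subgroup.center C) {c c' d d' : C}
    (h : π c = π c') (h' : π d = π d') : ⁅c, d⁆ = ⁅c', d'⁆ := by
  have key : ∀ {x y : C}, π x = π y → ∃ z ∈ Subgroup.center C, x = y * z := fun {x y} e =>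
    ⟨y⁻¹ * x, hc (by rw [MonoidHom.mem_ker, map_mul, map_inv, e, inv_mul_cancel]), by group⟩
  obtain ⟨z, hz, rfl⟩ := key h
  obtain ⟨w, hw, rfl⟩ := key h'
  have h1 : ∀ x : C, ⁅z, x⁆ = 1 := fun x =>
    commutatorElement_eq_one_iff_mul_comm.2 (Subgroup.mem_center_iff.1 hz x).symm
  have h2 : ∀ x : C, ⁅x, w⁆ = 1 := fun x =>
    commutatorElement_eq_one_iff_mul_comm.2 (Subgroup.mem_center_iff.1 hw x)
  rw [commutatorElement_mul_left_of_mem_center (by rw [h1]; exact one_mem _), h1, mul_one,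
    commutatorElement_mul_right_of_mem_center (by rw [h2]; exact one_mem _), h2, mul_one]

/-- The commutator pairing of a central extension `π : C → A` of an abelian group, as a linear
map on the exterior square. -/
lemma exists_commutatorPairing (hs : Function.Surjective π) (hc : π.ker ≤ Subgroup.center C) :
    ∃ f : ⋀[ℤ]^2 A →ₗ[ℤ] Additive (Subgroup.center C), ∀ c d : C,
      ((f (exteriorPower.ιMulti ℤ 2 ![(π c).toAdd, (π d).toAdd])).toMul : C) = ⁅c, d⁆ := by
  let τ : A → C := fun a => Function.surjInv hs (Multiplicative.ofAdd a)
  have hτ : ∀ a, π (τ a) = Multiplicative.ofAdd a := fun a => Function.surjInv_eq hs _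
  have hcen : ∀ c d : C, ⁅c, d⁆ ∈ Subgroup.center C := fun c d =>
    hc (map_commutatorElement_eq_one π c d)
  let B : A →+ A →+ Additive (Subgroup.center C) :=
    AddMonoidHom.mk' (fun a => AddMonoidHom.mk'
      (fun b => Additive.ofMul ⟨⁅τ a, τ b⁆, hcen _ _⟩) (by
        intro b b'
        apply Additive.toMul.injective
        apply Subtype.ext
        change ⁅τ a, τ (b + b')⁆ = ⁅τ a, τ b⁆ * ⁅τ a, τ b'⁆
        rw [← commutatorElement_mul_right_of_mem_center (hcen _ _)]
        exact commutatorElement_congr hc rfl (by simp [hτ]))) (by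
      intro a a'
      ext b
      change ⁅τ (a + a'), τ b⁆ = ⁅τ a, τ b⁆ * ⁅τ a', τ b⁆
      rw [← commutatorElement_mul_left_of_mem_center (hcen _ _)]
      exact commutatorElement_congr hc (by simp [hτ]) rfl)
  have hB : ∀ a b, ((B a b).toMul : C) = ⁅τ a, τ b⁆ := fun _ _ => rfl
  have hBalt : ∀ a, B a a = 0 := fun a => by
    apply Additive.toMul.injective
    apply Subtype.ext
    rw [hB]
    exact commutatorElement_self _
  let F : A [⋀^Fin 2]→ₗ[ℤ] Additive (Subgroup.center C) :=
    { toFun := fun v => B (v 0) (v 1)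
      map_update_add' := by
        intro _ v i x y
        fin_cases i <;> simp
      map_update_smul' := by
        intro _ v i n x
        fin_cases i <;> simp
      map_eq_zero_of_eq' := by
        intro v i j hv hij
        have h01 : v 0 = v 1 := by
          fin_cases i <;> fin_cases j <;> simp_all
        rw [h01]
        exact hBalt _ }
  refine ⟨exteriorPower.alternatingMapLinearEquiv F, fun c d => ?_⟩
  rw [exteriorPower.alternatingMapLinearEquiv_apply_ιMulti]
  change ((B (π c).toAdd (π d).toAdd).toMul : C) = _
  rw [hB]
  exact commutatorElement_congr hc (hτ _) (hτ _)

end Commutator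

/-! ### The integral Heisenberg group -/

/-- The integral Heisenberg group: triples `(p, q, z)` of integers with
`(p, q, z) (p', q', z') = (p + p', q + q', z + z' + p q')`. It is placed in an arbitrary universe,
so that it can serve as a test object whatever the universe of the test objects is. -/
@[ext]
structure IntHeisenberg.{u} : Type u where
  p : ℤ
  q : ℤ
  z : ℤ

namespace IntHeisenberg

instance : Mul IntHeisenberg := ⟨fun x y => ⟨x.p + y.p, x.q + y.q, x.z + y.z + x.p * y.q⟩⟩
instance : One IntHeisenberg := ⟨⟨0, 0, 0⟩⟩
instance : Inv IntHeisenberg := ⟨fun x => ⟨-x.p, -x.q, -x.z + x.p * x.q⟩⟩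

@[simp] lemma mul_p (x y : IntHeisenberg) : (x * y).p = x.p + y.p := rfl
@[simp] lemma mul_q (x y : IntHeisenberg) : (x * y).q = x.q + y.q := rfl
@[simp] lemma mul_z (x y : IntHeisenberg) : (x * y).z = x.z + y.z + x.p * y.q := rfl
@[simp] lemma one_p : (1 : IntHeisenberg).p = 0 := rfl
@[simp] lemma one_q : (1 : IntHeisenberg).q = 0 := rfl
@[simp] lemma one_z : (1 : IntHeisenberg).z = 0 := rfl
@[simp] lemma inv_p (x : IntHeisenberg) : (x⁻¹).p = -x.p := rfl
@[simp] lemma inv_q (x : IntHeisenberg) : (x⁻¹).q = -x.q := rfl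
@[simp] lemma inv_z (x : IntHeisenberg) : (x⁻¹).z = -x.z + x.p * x.q := rfl

instance : Group IntHeisenberg :=
  Group.ofLeftAxioms
    (fun x y z => by ext <;> simp <;> ring)
    (fun x => by ext <;> simp)
    (fun x => by ext <;> simp)

lemma commutatorElement_eq (x y : IntHeisenberg) : ⁅x, y⁆ = ⟨0, 0, x.p * y.q - y.p * x.q⟩ := by
  rw [commutatorElement_def]
  ext <;> simp
  ring

universe u v

/-- The central quotient `(p, q, z) ↦ (p, q)` of the Heisenberg group. -/
def proj : IntHeisenberg.{u} →* Multiplicative (ULift.{v} (ℤ × ℤ)) :=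
  MonoidHom.mk' (fun x => Multiplicative.ofAdd ⟨(x.p, x.q)⟩) (fun _ _ => rfl)

/-- The action of `ℤ²` on the Heisenberg group induced by conjugation. -/
def conjAct : Multiplicative (ULift.{v} (ℤ × ℤ)) →* MulAut IntHeisenberg.{u} where
  toFun g :=
    { toFun := fun x => ⟨x.p, x.q, x.z + g.toAdd.down.1 * x.q - x.p * g.toAdd.down.2⟩
      invFun := fun x => ⟨x.p, x.q, x.z - g.toAdd.down.1 * x.q + x.p * g.toAdd.down.2⟩
      left_inv := fun x => by ext <;> simp; ring
      right_inv := fun x => by ext <;> simp; ring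
      map_mul' := fun x y => by ext <;> simp; ring }
  map_one' := by ext x <;> simp
  map_mul' g h := by ext x <;> simp; ring

/-- The crossed module `IntHeisenberg → ℤ²` given by the central quotient. -/
def crossedModule :
    CrossedModule IntHeisenberg.{u} (Multiplicative (ULift.{v} (ℤ × ℤ))) where
  map := proj
  act := conjAct
  map_act g c := by
    rw [mul_comm g, mul_inv_cancel_right]
    rfl
  peiffer a b := by
    ext <;> simp [conjAct, proj]
    ring

end IntHeisenberg

/-! ### Detecting elements of a free crossed module -/

section Free

universe u v w₁ w₂ x

/-- An abelian group with the trivial action, as a crossed module over the trivial group. -/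
def CrossedModule.ofCommGroup (D : Type u) [CommGroup D] : CrossedModule D PUnit.{v + 1} where
  map := 1
  act := 1
  map_act _ _ := rfl
  peiffer a b := by simp [mul_comm a b]

variable {S : Type x} {C : Type u} [Group C]
  {M : CrossedModule C (Multiplicative (FreeAbelianGroup S))} {φ : S → C}

/-- The images of the generators generate the abelian base group. -/
lemma freeCrossedModule_map_surjective
    (hφ : ∀ s : S, M.map (φ s) = Multiplicative.ofAdd (FreeAbelianGroup.of s)) :
    Function.Surjective M.map := by
  intro a
  change a ∈ M.map.range
  induction a using Multiplicative.rec with | ofAdd a => ?_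
  induction a using FreeAbelianGroup.induction_on with
  | zero => exact one_mem _
  | of s => exact ⟨φ s, hφ s⟩
  | neg s h => exact inv_mem h
  | add a b ha hb => exact mul_mem ha hb

/-- When `M.map` is onto, the base group acts through conjugation in `C`, so every homomorphism to an abelian group is equivariant for the trivial action. -/
lemma map_act_eq_of_surjective (hs : Function.Surjective M.map) {D : Type*} [CommGroup D]
    (β : C →* D) (g : Multiplicative (FreeAbelianGroup S)) (c : C) : β (M.act g c) = β c := by
  obtain ⟨a, rfl⟩ := hs g
  rw [M.peiffer, map_mul, map_mul, map_inv, mul_comm (β a), mul_inv_cancel_right]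

/-- Two homomorphisms from a free crossed module with surjective boundary to an abelian group
agree if they agree on the generators. The values lie in an arbitrary universe: they are separated
by characters to `ℚ / ℤ`, and freeness is only used for test objects built from `ℚ / ℤ`. -/
lemma freeCrossedModule_hom_ext (hfree : CrossedModule.IsFreeOn.{u, x, x, w₁, w₂} M φ)
    (hs : Function.Surjective M.map) {D : Type*} [CommGroup D] {β γ : C →* D}
    (h : ∀ s, β (φ s) = γ (φ s)) (c : C) : β c = γ c := by
  rw [← mul_inv_eq_one, ← ofMul_eq_zero]
  refine CharacterModule.eq_zero_of_character_apply fun χ => ?_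
  let χ' : D →* Multiplicative (ULift.{w₁} (AddCircle (1 : ℚ))) :=
    AddMonoidHom.toMultiplicativeRight
      ((AddEquiv.ulift.symm.toAddMonoidHom).comp (χ : Additive D →+ AddCircle (1 : ℚ)))
  have hχ : ∀ d, (χ' d).toAdd.down = χ (Additive.ofMul d) := fun _ => rfl
  have huniq := (hfree (CrossedModule.ofCommGroup.{w₁, w₂} _) 1
    (fun s => χ' (β (φ s))) (fun _ => rfl)).unique
    (y₁ := χ'.comp β) (y₂ := χ'.comp γ)
    ⟨fun _ => rfl, fun _ => rfl, fun g c => map_act_eq_of_surjective hs (χ'.comp β) g c⟩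
    ⟨fun s => congrArg χ' (h s).symm, fun _ => rfl,
      fun g c => map_act_eq_of_surjective hs (χ'.comp γ) g c⟩
  have hc : χ' (β c) = χ' (γ c) := DFunLike.congr_fun huniq c
  rw [← hχ, map_mul, map_inv, hc, mul_inv_cancel]
  rfl

/-- The boundary induces an isomorphism of the abelianization with the free abelian group, the
inverse sending each basis element `s` to the class of `φ s`. -/
lemma freeCrossedModule_ker_le_commutator
    (hfree : CrossedModule.IsFreeOn.{u, x, x, w₁, w₂} M φ)
    (hφ : ∀ s : S, M.map (φ s) = Multiplicative.ofAdd (FreeAbelianGroup.of s)) :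
    M.map.ker ≤ commutator C := by
  intro c hc
  let σ : Multiplicative (FreeAbelianGroup S) →* Abelianization C :=
    AddMonoidHom.toMultiplicativeLeft
      (FreeAbelianGroup.lift fun s => Additive.ofMul (Abelianization.of (φ s)))
  have h : Abelianization.of c = σ (M.map c) :=
    freeCrossedModule_hom_ext (β := Abelianization.of) (γ := σ.comp M.map) hfree
      (freeCrossedModule_map_surjective hφ) (fun s => by simp [hφ, σ]) c
  rw [MonoidHom.mem_ker.1 hc, map_one] at h
  rwa [← Abelianization.ker_of, MonoidHom.mem_ker]

/-- For any two functionals `k, l` on the base group, some homomorphism to the Heisenberg group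
lifts `(k, l)`. -/
lemma freeCrossedModule_exists_heisenberg
    (hfree : CrossedModule.IsFreeOn.{u, x, x, w₁, w₂} M φ)
    (k l : FreeAbelianGroup S →+ ℤ) :
    ∃ β : C →* IntHeisenberg.{w₁}, ∀ c,
      (β c).p = k (M.map c).toAdd ∧ (β c).q = l (M.map c).toAdd := by
  let α : Multiplicative (FreeAbelianGroup S) →* Multiplicative (ULift.{w₂} (ℤ × ℤ)) :=
    AddMonoidHom.toMultiplicative ((AddEquiv.ulift.symm.toAddMonoidHom).comp (k.prod l))
  obtain ⟨β, ⟨-, hβ, -⟩, -⟩ := hfree IntHeisenberg.crossedModule.{w₁, w₂} α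
    (fun s => ⟨k (M.map (φ s)).toAdd, l (M.map (φ s)).toAdd, 0⟩) (fun _ => rfl)
  refine ⟨β, fun c => ?_⟩
  have h : ((β c).p, (β c).q) = (k (M.map c).toAdd, l (M.map c).toAdd) :=
    congrArg (fun y => (Multiplicative.toAdd y).down) (hβ c)
  exact Prod.mk.inj h

/-- The commutator pairing of a free crossed module is injective: the Heisenberg quotients recover
every coordinate of an element of the exterior square. -/
lemma commutatorPairing_injective
    (hfree : CrossedModule.IsFreeOn.{u, x, x, w₁, w₂} M φ) (hs : Function.Surjective M.map)
    (f : ⋀[ℤ]^2 (FreeAbelianGroup S) →ₗ[ℤ] Additive (Subgroup.center C))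
    (hf : ∀ c d : C, ((f (exteriorPower.ιMulti ℤ 2
      ![(M.map c).toAdd, (M.map d).toAdd])).toMul : C) = ⁅c, d⁆) :
    Function.Injective f := by
  classical
  let _ : LinearOrder S := linearOrderOfSTO WellOrderingRel
  let b := FreeAbelianGroup.basis S
  rw [injective_iff_map_eq_zero]
  intro t ht
  apply (b.exteriorPower 2).ext_elem
  intro s
  rw [map_zero, Finsupp.zero_apply, exteriorPower.basis_repr_apply]
  let e : Fin 2 → S := Set.powersetCard.ofFinEmbEquiv.symm s
  obtain ⟨β, hβ⟩ := freeCrossedModule_exists_heisenberg hfree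
    (b.coord (e 0)).toAddMonoidHom (b.coord (e 1)).toAddMonoidHom
  let γ : Additive (Subgroup.center C) →+ Additive IntHeisenberg.{w₁} :=
    (β.comp (Subgroup.center C).subtype).toAdditive
  -- On wedges, and hence on sums of wedges, `β ∘ f` is `(0, 0, coordinate at s)`.
  have key : ∀ t, γ (f t) =
      Additive.ofMul ⟨0, 0, exteriorPower.ιMultiDual ℤ 2 b s t⟩ := by
    intro t
    have ht : t ∈ Submodule.span ℤ (Set.range (exteriorPower.ιMulti ℤ 2)) := by
      rw [exteriorPower.ιMulti_span]; trivial
    induction ht using Submodule.span_induction with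
    | mem y hy =>
      obtain ⟨v, rfl⟩ := hy
      obtain ⟨c, hc⟩ := hs (Multiplicative.ofAdd (v 0))
      obtain ⟨d, hd⟩ := hs (Multiplicative.ofAdd (v 1))
      have hv : v = ![(M.map c).toAdd, (M.map d).toAdd] := by
        funext i; fin_cases i <;> simp [hc, hd]
      have h1 : γ (f (exteriorPower.ιMulti ℤ 2 v)) = Additive.ofMul (β ⁅c, d⁆) := by
        rw [hv, ← hf]; rfl
      rw [h1, map_commutatorElement, IntHeisenberg.commutatorElement_eq,
        exteriorPower.ιMultiDual_apply_ιMulti, Matrix.det_fin_two]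
      congr 2
      simp only [(hβ c).1, (hβ c).2, (hβ d).1, (hβ d).2, hv]
      simp [e]
      ring
    | zero => simp only [map_zero]; rfl
    | add y z _ _ hy hz =>
      rw [map_add, map_add, hy, hz, map_add, ← ofMul_mul]
      congr 1
      ext <;> simp
    | smul n y _ hy =>
      rw [map_smul, map_zsmul, hy, map_smul]
      generalize exteriorPower.ιMultiDual ℤ 2 b s y = m
      let ζ : ℤ →+ Additive IntHeisenberg.{w₁} :=
        AddMonoidHom.mk' (fun m => Additive.ofMul ⟨0, 0, m⟩) (fun m n => by
          rw [← ofMul_mul]; congr 1; ext <;> simp)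
      exact (map_zsmul ζ n m).symm
  have h0 := key t
  rw [ht, map_zero] at h0
  exact (congrArg (fun y => (Additive.toMul y).z) h0).symm

end Free

/-- For the free abelian group `A` on a set `S`, the free crossed module `∂ : C → A`
on `S ⊆ A` is a central extension of `A` with kernel the exterior square `A ∧ A`. -/
theorem freeAbelian_freeCrossedModule_kernel (S : Type*) {C : Type*} [Group C]
    (M : CrossedModule C (Multiplicative (FreeAbelianGroup S)))
    (φ : S → C) (hfree : M.IsFreeOn φ)
    (hφ : ∀ s : S, M.map (φ s) = Multiplicative.ofAdd (FreeAbelianGroup.of s)) :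
    Function.Surjective M.map ∧ M.map.ker ≤ Subgroup.center C ∧
      Nonempty (Additive M.map.ker ≃+ ⋀[ℤ]^2 (FreeAbelianGroup S)) := by
  have hs := freeCrossedModule_map_surjective hφ
  have hc : M.map.ker ≤ Subgroup.center C := fun c hc => by
    rw [Subgroup.mem_center_iff]
    intro d
    have h := M.peiffer c d
    rw [MonoidHom.mem_ker.1 hc, map_one, MulAut.one_apply] at h
    exact mul_inv_eq_iff_eq_mul.1 h.symm |>.symm
  refine ⟨hs, hc, ?_⟩
  obtain ⟨f, hf⟩ := exists_commutatorPairing hs hc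
  have hinj := commutatorPairing_injective hfree hs f hf
  let g : Multiplicative (⋀[ℤ]^2 (FreeAbelianGroup S)) →* C :=
    (Subgroup.center C).subtype.comp (AddMonoidHom.toMultiplicativeLeft f.toAddMonoidHom)
  have hg : ∀ t, g t = ((f t.toAdd).toMul : C) := fun _ => rfl
  have hginj : Function.Injective g := fun t t' h => hinj (Subtype.ext h)
  have hgrange : g.range = M.map.ker := by
    apply le_antisymm
    · rintro _ ⟨t, rfl⟩
      have ht : t.toAdd ∈ Submodule.span ℤ (Set.range (exteriorPower.ιMulti ℤ 2)) := by
        rw [exteriorPower.ιMulti_span]; trivial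
      rw [hg]
      generalize t.toAdd = y at ht
      induction ht using Submodule.span_induction with
      | mem y hy =>
        obtain ⟨v, rfl⟩ := hy
        obtain ⟨c, hc⟩ := hs (Multiplicative.ofAdd (v 0))
        obtain ⟨d, hd⟩ := hs (Multiplicative.ofAdd (v 1))
        have hv : v = ![(M.map c).toAdd, (M.map d).toAdd] := by
          funext i; fin_cases i <;> simp [hc, hd]
        rw [hv, hf]
        exact map_commutatorElement_eq_one M.map c d
      | zero => rw [map_zero]; exact one_mem _
      | add y z _ _ hy hz => rw [map_add]; exact mul_mem hy hz
      | smul n y _ hy => rw [map_smul]; exact zpow_mem hy n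
    · refine (freeCrossedModule_ker_le_commutator hfree hφ).trans ?_
      rw [commutator_def, Subgroup.commutator_le]
      intro c _ d _
      exact ⟨Multiplicative.ofAdd _, (hg _).trans (hf c d)⟩
  let E : Multiplicative (⋀[ℤ]^2 (FreeAbelianGroup S)) ≃* M.map.ker :=
    (MonoidHom.ofInjective hginj).trans (MulEquiv.subgroupCongr hgrange)
  exact ⟨MulEquiv.toAdditiveLeft E.symm⟩
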